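/- Let μ > 0, λ + μ > 0, a > 0, and γ > 1 be real constants. Suppose (ρ, v) is a smooth solution on ℝ² of the stationary compressible Navier–Stokes system: div(ρv) = 0, div(ρ v⊗v) = -∇p + μΔv + (μ+λ)∇(div v), with p = aρ^γ and ρ ≥ 0. If ρ ∈ L^∞(ℝ²) and v ∈ H¹(ℝ²) (i.e. v ∈ L²(ℝ²) and ∇v ∈ L²(ℝ²)), then v = 0 identically and ρ is a constant function on ℝ². -/

import Mathlib

open MeasureTheory Real Filter

noncomputable section

/-- Partial derivative `∂ⱼ f (x)` of a scalar function on `ℝ²`. -/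
def pd (f : EuclideanSpace ℝ (Fin 2) → ℝ) (j : Fin 2)
    (x : EuclideanSpace ℝ (Fin 2)) : ℝ :=
  fderiv ℝ f x (EuclideanSpace.single j 1)

/-- Divergence of a vector field on `ℝ²`. -/
def divV (v : EuclideanSpace ℝ (Fin 2) → EuclideanSpace ℝ (Fin 2))
    (x : EuclideanSpace ℝ (Fin 2)) : ℝ :=
  ∑ j, pd (fun y => v y j) j x

/-- Laplacian of a scalar function on `ℝ²`. -/
def lap (f : EuclideanSpace ℝ (Fin 2) → ℝ)
    (x : EuclideanSpace ℝ (Fin 2)) : ℝ :=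
  ∑ j, pd (pd f j) j x

/-!
Multiplying the momentum equation by `v` and using the continuity equation, the energy balance
takes the divergence form `div F = -(μ |∇v|² + (μ + λ) (div v)²)`. It is tested against cutoffs
`φ_R(x) = φ(x / R)` with `R → ∞`, and the claim is that `∫ F · ∇φ_R → 0`.

The flux `F` has two parts. The kinetic and viscous part is integrable: the embedding
`W^{1,1} ⊆ L^{N/(N-1)}` applied to `v_i²` gives `|v|² ∈ L²` when `N = 2`. Hence its contribution is
bounded by `‖∇φ_R‖_∞ = O(1/R)`. The enthalpy part `a γ / (γ - 1) ρ ^ γ v` is only in `L²`, but the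
norm of `∇φ_R` in `L^N` does not depend on `R` and `∇φ_R` is supported in `|x| ≥ R`, so Hölder's
inequality bounds its contribution by the norm of a tail.

So the dissipation vanishes, `v` is a constant in `L²`, that is, zero, and the momentum equation
reduces to `∇(a ρ ^ γ) = 0`.
-/

open scoped ENNReal NNReal

section Lp

theorem memLp_mul_of_norm_le {X 𝕜 : Type*} [MeasurableSpace X] {μ : Measure X} [NormedRing 𝕜]
    {f g : X → 𝕜} {p : ℝ≥0∞} {C : ℝ} (hf : AEStronglyMeasurable f μ) (hbound : ∀ x, ‖f x‖ ≤ C)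
    (hg : MemLp g p μ) : MemLp (fun x => f x * g x) p μ := by
  refine hg.of_le_mul (c := C) (hf.mul hg.1) (.of_forall fun x => ?_)
  exact (norm_mul_le _ _).trans (mul_le_mul_of_nonneg_right (hbound x) (norm_nonneg _))

theorem tendsto_eLpNorm_indicator_compl_ball {X F : Type*} [PseudoMetricSpace X]
    [MeasurableSpace X] [OpensMeasurableSpace X] {μ : Measure X} [NormedAddCommGroup F] {f : X → F}
    {p : ℝ≥0} (hp : p ≠ 0) (hf : MemLp f p μ) (c : X) :
    Tendsto (fun R => eLpNorm ((Metric.ball c R)ᶜ.indicator f) p μ) atTop (nhds 0) := by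
  have hp' : (p : ℝ≥0∞) ≠ 0 := ENNReal.coe_ne_zero.2 hp
  have hpow (R : ℝ) : eLpNorm ((Metric.ball c R)ᶜ.indicator f) p μ =
      (∫⁻ x, (Metric.ball c R)ᶜ.indicator (fun x => ‖f x‖ₑ ^ (p : ℝ)) x ∂μ) ^ (1 / (p : ℝ)) := by
    have hmeas := (Metric.isOpen_ball (x := c) (ε := R)).measurableSet.compl
    rw [eLpNorm_indicator_eq_eLpNorm_restrict hmeas, lintegral_indicator hmeas,
      eLpNorm_eq_lintegral_rpow_enorm_toReal hp' ENNReal.coe_ne_top, ENNReal.coe_toReal]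
  have hfin : ∫⁻ x, ‖f x‖ₑ ^ (p : ℝ) ∂μ ≠ ∞ :=
    (lintegral_rpow_enorm_lt_top_of_eLpNorm_lt_top hp' ENNReal.coe_ne_top hf.2).ne
  have htail : Tendsto
      (fun R => ∫⁻ x, (Metric.ball c R)ᶜ.indicator (fun x => ‖f x‖ₑ ^ (p : ℝ)) x ∂μ)
      atTop (nhds (∫⁻ _, 0 ∂μ)) := by
    refine tendsto_lintegral_filter_of_dominated_convergence' _ (.of_forall fun R => ?_)
      (.of_forall fun R => .of_forall fun x => Set.indicator_le_self _ _ x) hfin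
      (.of_forall fun x => ?_)
    · exact (hf.1.enorm.pow_const _).indicator Metric.isOpen_ball.measurableSet.compl
    · refine tendsto_const_nhds.congr' ((eventually_gt_atTop (dist x c)).mono fun R hR => ?_)
      exact (Set.indicator_of_notMem (Set.notMem_compl_iff.2 (Metric.mem_ball.2 hR)) _).symm
  simp_rw [hpow]
  simpa [pos_iff_ne_zero.2 hp] using htail.ennrpow_const (1 / (p : ℝ))

end Lp

section Cutoff

variable {E : Type*} [NormedAddCommGroup E] [NormedSpace ℝ E]

/-- The smooth cutoff at scale `R`: for `R > 0` it equals `1` on the ball of radius `R` and vanishes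
outside the ball of radius `2R`. It is a dilate of a single bump function, so that its gradient
scales exactly. At `R = 0` it is the constant `1`. -/
def cutoff [HasContDiffBump E] (R : ℝ) (x : E) : ℝ :=
  (⟨1, 2, one_pos, one_lt_two⟩ : ContDiffBump (0 : E)) (R⁻¹ • x)

variable [HasContDiffBump E]

theorem contDiff_cutoff {n : ℕ∞} (R : ℝ) : ContDiff ℝ n (cutoff R : E → ℝ) :=
  (ContDiffBump.contDiff _).comp (contDiff_const_smul _)

theorem norm_cutoff_le_one (R : ℝ) (x : E) : ‖cutoff R x‖ ≤ 1 := by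
  rw [cutoff, Real.norm_of_nonneg (ContDiffBump.nonneg _)]
  exact ContDiffBump.le_one _

theorem cutoff_eq_one {R : ℝ} {x : E} (hx : ‖x‖ < R) : cutoff R x = 1 := by
  have hR : 0 < R := (norm_nonneg x).trans_lt hx
  refine ContDiffBump.one_of_mem_closedBall _ (mem_closedBall_zero_iff.2 ?_)
  rw [norm_smul, norm_inv, Real.norm_of_nonneg hR.le, inv_mul_le_one₀ hR]
  exact hx.le

theorem tendsto_cutoff (x : E) : Tendsto (fun R => cutoff R x) atTop (nhds 1) :=
  tendsto_const_nhds.congr' <|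
    (eventually_gt_atTop ‖x‖).mono fun _ hR => (cutoff_eq_one hR).symm

theorem fderiv_cutoff (R : ℝ) (x : E) :
    fderiv ℝ (cutoff R) x = R⁻¹ • fderiv ℝ (cutoff 1) (R⁻¹ • x) := by
  have hdilate : (cutoff R : E → ℝ) = fun y => cutoff 1 (R⁻¹ • y) := by
    funext y
    simp only [cutoff, inv_one, one_smul]
  rw [hdilate, fderiv_comp_smul]

theorem fderiv_cutoff_eq_zero {R : ℝ} {x : E} (hx : ‖x‖ < R) : fderiv ℝ (cutoff R) x = 0 := by
  have hone : (cutoff R : E → ℝ) =ᶠ[nhds x] fun _ => 1 :=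
    (continuous_norm.tendsto x).eventually_lt_const hx |>.mono fun _ => cutoff_eq_one
  rw [hone.fderiv_eq, fderiv_fun_const, Pi.zero_apply]

variable [FiniteDimensional ℝ E]

theorem hasCompactSupport_cutoff {R : ℝ} (hR : R ≠ 0) :
    HasCompactSupport (cutoff R : E → ℝ) :=
  (ContDiffBump.hasCompactSupport _).comp_homeomorph (Homeomorph.smulOfNeZero R⁻¹ (inv_ne_zero hR))

theorem exists_norm_fderiv_cutoff_le :
    ∃ K, ∀ (R : ℝ) (x : E), ‖fderiv ℝ (cutoff R) x‖ ≤ |R|⁻¹ * K := by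
  obtain ⟨K, hK⟩ := ((contDiff_cutoff (n := 1) 1).continuous_fderiv (by simp))
    |>.bounded_above_of_compact_support ((hasCompactSupport_cutoff (E := E) one_ne_zero).fderiv ℝ)
  refine ⟨K, fun R x => ?_⟩
  rw [fderiv_cutoff, norm_smul, norm_inv, Real.norm_eq_abs]
  gcongr
  exact hK _

end Cutoff

section CutoffGradient

variable {E : Type*} [NormedAddCommGroup E] [NormedSpace ℝ E] [FiniteDimensional ℝ E]
  [MeasurableSpace E] {μ : Measure E}

theorem tendsto_integral_fderiv_cutoff_mul_of_integrable {f : E → ℝ} (hf : Integrable f μ)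
    (e : E) : Tendsto (fun R => ∫ x, fderiv ℝ (cutoff R) x e * f x ∂μ) atTop (nhds 0) := by
  obtain ⟨K, hK⟩ := exists_norm_fderiv_cutoff_le (E := E)
  have hbound : Tendsto (fun R : ℝ => |R|⁻¹ * (K * ‖e‖ * ∫ x, ‖f x‖ ∂μ)) atTop (nhds 0) := by
    simpa using tendsto_abs_atTop_atTop.inv_tendsto_atTop.mul_const (K * ‖e‖ * ∫ x, ‖f x‖ ∂μ)
  refine squeeze_zero_norm (fun R => ?_) hbound
  rw [← mul_assoc, ← integral_const_mul]
  refine norm_integral_le_of_norm_le (hf.norm.const_mul _) (Eventually.of_forall fun x => ?_)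
  rw [norm_mul, ← mul_assoc]
  gcongr
  exact ContinuousLinearMap.le_of_opNorm_le _ (hK R x) e

variable [BorelSpace E] [μ.IsAddHaarMeasure]

theorem eLpNorm_comp_smul {F : Type*} [NormedAddCommGroup F] (f : E → F) {c : ℝ} (hc : c ≠ 0)
    {p : ℝ≥0∞} (hp : p ≠ ∞) :
    eLpNorm (fun x => f (c • x)) p μ =
      ENNReal.ofReal |(c ^ Module.finrank ℝ E)⁻¹| ^ (1 / p).toReal * eLpNorm f p μ := by
  have hembed : MeasurableEmbedding fun x : E => c • x :=
    (Homeomorph.smulOfNeZero c hc).measurableEmbedding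
  rw [← smul_eq_mul, ← eLpNorm_smul_measure_of_ne_top hp, ← Measure.map_addHaar_smul μ hc,
    hembed.eLpNorm_map_measure]
  rfl

theorem eLpNorm_fderiv_cutoff_one_lt_top (p : ℝ≥0∞) :
    eLpNorm (fderiv ℝ (cutoff 1 : E → ℝ)) p μ < ∞ :=
  ((contDiff_cutoff (n := 1) 1).continuous_fderiv (by simp)).memLp_of_hasCompactSupport
    ((hasCompactSupport_cutoff one_ne_zero).fderiv ℝ) |>.2

theorem eLpNorm_const_smul_comp_smul {F : Type*} [NormedAddCommGroup F] [NormedSpace ℝ F]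
    (f : E → F) {c : ℝ} (hc : 0 < c) :
    eLpNorm (fun x => c • f (c • x)) (Module.finrank ℝ E) μ =
      eLpNorm f (Module.finrank ℝ E) μ := by
  rcases eq_or_ne (Module.finrank ℝ E) 0 with hd | hd
  · simp [hd]
  have hscale : ‖c‖ₑ * ENNReal.ofReal |(c ^ Module.finrank ℝ E)⁻¹| ^
      (1 / (Module.finrank ℝ E : ℝ≥0∞)).toReal = 1 := by
    rw [← inv_pow, abs_of_pos (by positivity), ENNReal.ofReal_pow (by positivity),
      ← ENNReal.rpow_natCast, ← ENNReal.rpow_mul, Real.enorm_of_nonneg hc.le,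
      ENNReal.ofReal_inv_of_pos hc]
    simp [hd, ENNReal.mul_inv_cancel, hc]
  rw [show (fun x => c • f (c • x)) = c • fun x => f (c • x) from rfl, eLpNorm_const_smul,
    eLpNorm_comp_smul f hc.ne' (by simp), ← mul_assoc, hscale, one_mul]

theorem eLpNorm_fderiv_cutoff {R : ℝ} (hR : 0 < R) :
    eLpNorm (fderiv ℝ (cutoff R : E → ℝ)) (Module.finrank ℝ E) μ =
      eLpNorm (fderiv ℝ (cutoff 1 : E → ℝ)) (Module.finrank ℝ E) μ := by
  rw [← eLpNorm_const_smul_comp_smul (fderiv ℝ (cutoff 1)) (inv_pos.2 hR),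
    show fderiv ℝ (cutoff R : E → ℝ) = _ from funext (fderiv_cutoff R)]

-- The gradient of the cutoff vanishes on the ball of radius `R`, so only the tail of `f` is seen.
theorem enorm_integral_fderiv_cutoff_mul_le {f : E → ℝ} {p : ℝ≥0}
    (hp : NNReal.HolderConjugate (Module.finrank ℝ E) p) (hf : AEStronglyMeasurable f μ) (e : E)
    {R : ℝ} (hR : 0 < R) :
    ‖∫ x, fderiv ℝ (cutoff R) x e * f x ∂μ‖ₑ ≤
      ‖e‖ₑ * eLpNorm (fderiv ℝ (cutoff 1 : E → ℝ)) (Module.finrank ℝ E) μ *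
        eLpNorm ((Metric.ball 0 R)ᶜ.indicator f) p μ := by
  have hconj : ENNReal.HolderConjugate (Module.finrank ℝ E) p := by
    simpa only [ENNReal.coe_natCast] using hp.coe_ennreal
  have htail (x : E) : fderiv ℝ (cutoff R) x e * f x =
      fderiv ℝ (cutoff R) x e * (Metric.ball 0 R)ᶜ.indicator f x := by
    by_cases hx : x ∈ Metric.ball 0 R
    · simp [fderiv_cutoff_eq_zero (mem_ball_zero_iff.1 hx)]
    · simp [hx]
  simp_rw [htail]
  calc ‖∫ x, fderiv ℝ (cutoff R) x e * (Metric.ball 0 R)ᶜ.indicator f x ∂μ‖ₑ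
      ≤ eLpNorm (fun x => fderiv ℝ (cutoff R) x e * (Metric.ball 0 R)ᶜ.indicator f x) 1 μ := by
        rw [eLpNorm_one_eq_lintegral_enorm]
        exact enorm_integral_le_lintegral_enorm _
    _ ≤ ‖e‖₊ * eLpNorm (fderiv ℝ (cutoff R)) (Module.finrank ℝ E) μ *
          eLpNorm ((Metric.ball 0 R)ᶜ.indicator f) p μ := by
        refine eLpNorm_le_eLpNorm_mul_eLpNorm_of_nnnorm
          ((contDiff_cutoff (n := 1) R).continuous_fderiv (by simp)).aestronglyMeasurable
          (hf.indicator Metric.isOpen_ball.measurableSet.compl) (fun L y => L e * y) ‖e‖₊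
          (.of_forall fun x => ?_)
        rw [nnnorm_mul, mul_comm ‖e‖₊]
        gcongr
        exact ContinuousLinearMap.le_opNNNorm _ e
    _ = _ := by rw [eLpNorm_fderiv_cutoff hR, enorm_eq_nnnorm]

theorem tendsto_integral_fderiv_cutoff_mul_of_memLp {f : E → ℝ} {p : ℝ≥0}
    (hp : NNReal.HolderConjugate (Module.finrank ℝ E) p) (hf : MemLp f p μ) (e : E) :
    Tendsto (fun R => ∫ x, fderiv ℝ (cutoff R) x e * f x ∂μ) atTop (nhds 0) := by
  have hconst : ‖e‖ₑ * eLpNorm (fderiv ℝ (cutoff 1 : E → ℝ)) (Module.finrank ℝ E) μ ≠ ∞ :=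
    ENNReal.mul_ne_top enorm_ne_top (eLpNorm_fderiv_cutoff_one_lt_top _).ne
  have hbound := ENNReal.Tendsto.const_mul
    (tendsto_eLpNorm_indicator_compl_ball hp.symm.ne_zero hf 0) (.inr hconst)
  rw [mul_zero] at hbound
  exact tendsto_zero_iff_enorm_tendsto_zero.2 <|
    tendsto_of_tendsto_of_tendsto_of_le_of_le' tendsto_const_nhds hbound
      (.of_forall fun _ => zero_le) <|
      (eventually_gt_atTop 0).mono fun _ => enorm_integral_fderiv_cutoff_mul_le hp hf.1 e

end CutoffGradient

section FluxAtInfinity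

variable {E : Type*} [NormedAddCommGroup E] [NormedSpace ℝ E] [FiniteDimensional ℝ E]
  [MeasurableSpace E] [BorelSpace E] {μ : Measure E}

theorem tendsto_integral_cutoff_mul {f : E → ℝ} (hf : Integrable f μ) :
    Tendsto (fun R => ∫ x, cutoff R x * f x ∂μ) atTop (nhds (∫ x, f x ∂μ)) := by
  refine tendsto_integral_filter_of_dominated_convergence _ (.of_forall fun R => ?_)
    (.of_forall fun R => .of_forall fun x => ?_) hf.norm (.of_forall fun x => ?_)
  · exact (contDiff_cutoff (n := 1) R).continuous.aestronglyMeasurable.mul hf.1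
  · rw [norm_mul]
    exact mul_le_of_le_one_left (norm_nonneg _) (norm_cutoff_le_one R x)
  · simpa only [one_mul] using (tendsto_cutoff x).mul_const _

variable [μ.IsAddHaarMeasure]

theorem integral_mul_fderiv_eq_neg_of_hasCompactSupport {φ f : E → ℝ} (hφ : ContDiff ℝ 1 φ)
    (hφc : HasCompactSupport φ) (hf : ContDiff ℝ 1 f) (e : E) :
    ∫ x, φ x * fderiv ℝ f x e ∂μ = -∫ x, fderiv ℝ φ x e * f x ∂μ := by
  have hdφ : Continuous fun x => fderiv ℝ φ x e := by fun_prop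
  have hdf : Continuous fun x => fderiv ℝ f x e := by fun_prop
  exact integral_mul_fderiv_eq_neg_fderiv_mul_of_integrable
    ((hdφ.mul hf.continuous).integrable_of_hasCompactSupport (hφc.fderiv_apply ℝ e).mul_right)
    ((hφ.continuous.mul hdf).integrable_of_hasCompactSupport hφc.mul_right)
    ((hφ.continuous.mul hf.continuous).integrable_of_hasCompactSupport hφc.mul_right)
    (fun x _ => hφ.differentiable one_ne_zero x) (fun x _ => hf.differentiable one_ne_zero x)

theorem integral_cutoff_mul_fderiv {f : E → ℝ} (hf : ContDiff ℝ 1 f) (e : E) {R : ℝ}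
    (hR : R ≠ 0) :
    ∫ x, cutoff R x * fderiv ℝ f x e ∂μ = -∫ x, fderiv ℝ (cutoff R) x e * f x ∂μ :=
  integral_mul_fderiv_eq_neg_of_hasCompactSupport (contDiff_cutoff R)
    (hasCompactSupport_cutoff hR) hf e

theorem tendsto_integral_cutoff_mul_fderiv_of_integrable {f : E → ℝ} (hf : ContDiff ℝ 1 f)
    (hint : Integrable f μ) (e : E) :
    Tendsto (fun R => ∫ x, cutoff R x * fderiv ℝ f x e ∂μ) atTop (nhds 0) := by
  rw [← neg_zero]
  refine (tendsto_integral_fderiv_cutoff_mul_of_integrable hint e).neg.congr' ?_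
  filter_upwards [eventually_ne_atTop 0] with R hR using (integral_cutoff_mul_fderiv hf e hR).symm

theorem tendsto_integral_cutoff_mul_fderiv_of_memLp {f : E → ℝ} (hf : ContDiff ℝ 1 f) {p : ℝ≥0}
    (hp : NNReal.HolderConjugate (Module.finrank ℝ E) p) (hLp : MemLp f p μ) (e : E) :
    Tendsto (fun R => ∫ x, cutoff R x * fderiv ℝ f x e ∂μ) atTop (nhds 0) := by
  rw [← neg_zero]
  refine (tendsto_integral_fderiv_cutoff_mul_of_memLp hp hLp e).neg.congr' ?_
  filter_upwards [eventually_ne_atTop 0] with R hR using (integral_cutoff_mul_fderiv hf e hR).symm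

theorem integrable_cutoff_mul_fderiv {f : E → ℝ} (hf : ContDiff ℝ 1 f) (e : E) {R : ℝ}
    (hR : R ≠ 0) : Integrable (fun x => cutoff R x * fderiv ℝ f x e) μ := by
  have hdf : Continuous fun x => fderiv ℝ f x e := by fun_prop
  exact ((contDiff_cutoff (n := 1) R).continuous.mul hdf).integrable_of_hasCompactSupport
    (hasCompactSupport_cutoff hR).mul_right

theorem integral_sum_fderiv_add_fderiv_eq_zero {ι : Type*} [Fintype ι] {f g : ι → E → ℝ}
    {p : ℝ≥0} (hp : NNReal.HolderConjugate (Module.finrank ℝ E) p)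
    (hf : ∀ j, ContDiff ℝ 1 (f j)) (hfint : ∀ j, Integrable (f j) μ)
    (hg : ∀ j, ContDiff ℝ 1 (g j)) (hgLp : ∀ j, MemLp (g j) p μ) (e : ι → E)
    (hdiv : Integrable (fun x => ∑ j, (fderiv ℝ (f j) x (e j) + fderiv ℝ (g j) x (e j))) μ) :
    ∫ x, ∑ j, (fderiv ℝ (f j) x (e j) + fderiv ℝ (g j) x (e j)) ∂μ = 0 := by
  have hflux : Tendsto
      (fun R => ∑ j, ((∫ x, cutoff R x * fderiv ℝ (f j) x (e j) ∂μ) +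
        ∫ x, cutoff R x * fderiv ℝ (g j) x (e j) ∂μ)) atTop (nhds 0) := by
    simpa only [add_zero, Finset.sum_const_zero] using tendsto_finsetSum Finset.univ fun j _ =>
      (tendsto_integral_cutoff_mul_fderiv_of_integrable (hf j) (hfint j) (e j)).add
        (tendsto_integral_cutoff_mul_fderiv_of_memLp (hg j) hp (hgLp j) (e j))
  refine tendsto_nhds_unique (tendsto_integral_cutoff_mul hdiv) (hflux.congr' ?_)
  filter_upwards [eventually_ne_atTop 0] with R hR
  have hfR (j : ι) := integrable_cutoff_mul_fderiv (μ := μ) (hf j) (e j) hR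
  have hgR (j : ι) := integrable_cutoff_mul_fderiv (μ := μ) (hg j) (e j) hR
  simp only [Finset.mul_sum, mul_add]
  rw [integral_finsetSum _ fun j _ => by exact (hfR j).add (hgR j)]
  exact Finset.sum_congr rfl fun j _ => (integral_add (hfR j) (hgR j)).symm

end FluxAtInfinity

section Sobolev

variable {E : Type*} [NormedAddCommGroup E] [NormedSpace ℝ E] [FiniteDimensional ℝ E]
  [MeasurableSpace E] {μ : Measure E} {F : Type*} [NormedAddCommGroup F] [NormedSpace ℝ F]

theorem exists_eLpNorm_fderiv_cutoff_smul_le {u : E → F} (hu : ContDiff ℝ 1 u)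
    (hint : Integrable u μ) (hdint : Integrable (fderiv ℝ u) μ) :
    ∃ C ≠ ∞, ∀ R ≥ 1, eLpNorm (fderiv ℝ fun x => cutoff R x • u x) 1 μ ≤ C := by
  obtain ⟨K, hK⟩ := exists_norm_fderiv_cutoff_le (E := E)
  have hK_nonneg : 0 ≤ K := by simpa using (norm_nonneg _).trans (hK 1 0)
  have hmajorant : Integrable (fun x => ‖fderiv ℝ u x‖ + K * ‖u x‖) μ :=
    hdint.norm.add (hint.norm.const_mul K)
  refine ⟨_, (memLp_one_iff_integrable.2 hmajorant).2.ne, fun R hR => eLpNorm_mono_real fun x => ?_⟩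
  have hgrad : ‖fderiv ℝ (cutoff R) x‖ ≤ K :=
    (hK R x).trans <| mul_le_of_le_one_left hK_nonneg <|
      inv_le_one_of_one_le₀ (hR.trans (le_abs_self R))
  rw [fderiv_fun_smul ((contDiff_cutoff (n := 1) R).differentiable one_ne_zero x)
    (hu.differentiable one_ne_zero x)]
  calc ‖cutoff R x • fderiv ℝ u x + (fderiv ℝ (cutoff R) x).smulRight (u x)‖
      ≤ ‖cutoff R x‖ * ‖fderiv ℝ u x‖ + ‖fderiv ℝ (cutoff R) x‖ * ‖u x‖ := by
        rw [← norm_smul, ← ContinuousLinearMap.norm_smulRight_apply]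
        exact norm_add_le _ _
    _ ≤ 1 * ‖fderiv ℝ u x‖ + K * ‖u x‖ := by
        gcongr
        exact norm_cutoff_le_one R x
    _ = ‖fderiv ℝ u x‖ + K * ‖u x‖ := by rw [one_mul]

variable [BorelSpace E] [μ.IsAddHaarMeasure]

theorem memLp_of_integrable_of_integrable_fderiv {u : E → F}
    (hu : ContDiff ℝ 1 u) {p : ℝ≥0} (hp : NNReal.HolderConjugate (Module.finrank ℝ E) p)
    (hint : Integrable u μ) (hdint : Integrable (fderiv ℝ u) μ) : MemLp u p μ := by
  obtain ⟨C, hC, hbound⟩ := exists_eLpNorm_fderiv_cutoff_smul_le hu hint hdint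
  have hsobolev : ∀ᶠ R : ℝ in atTop, eLpNorm (fun x => cutoff R x • u x) p μ ≤
      eLpNormLESNormFDerivOneConst μ p * C := by
    filter_upwards [eventually_ge_atTop 1] with R hR
    refine (eLpNorm_le_eLpNorm_fderiv_one μ ((contDiff_cutoff (n := 1) R).smul hu)
      (hasCompactSupport_cutoff (by positivity)).smul_right hp).trans ?_
    gcongr
    exact hbound R hR
  refine ⟨hu.continuous.aestronglyMeasurable, LE.le.trans_lt ?_
    (ENNReal.mul_lt_top (ENNReal.coe_lt_top (r := eLpNormLESNormFDerivOneConst μ p)) hC.lt_top)⟩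
  refine Lp.eLpNorm_le_of_ae_tendsto hsobolev
    (fun R => ((contDiff_cutoff (n := 1) R).smul hu).continuous.aestronglyMeasurable)
    (.of_forall fun x => ?_)
  simpa only [one_smul] using (tendsto_cutoff x).smul_const (u x)

theorem memLp_sq_of_memLp_fderiv {f : E → ℝ} (hf : ContDiff ℝ 1 f) {p : ℝ≥0}
    (hp : NNReal.HolderConjugate (Module.finrank ℝ E) p) (hL2 : MemLp f 2 μ)
    (hdL2 : MemLp (fderiv ℝ f) 2 μ) : MemLp (fun x => f x ^ 2) p μ := by
  refine memLp_of_integrable_of_integrable_fderiv (hf.pow 2) hp hL2.integrable_sq ?_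
  have hfderiv : fderiv ℝ (fun x => f x ^ 2) = fun x => (2 * f x) • fderiv ℝ f x := by
    funext x
    simp [fderiv_fun_pow 2 (hf.differentiable one_ne_zero x)]
  rw [hfderiv, ← memLp_one_iff_integrable]
  exact hdL2.smul (hL2.const_mul 2)

end Sobolev

local notation "ℝ²" => EuclideanSpace ℝ (Fin 2)

section PartialDerivatives

variable {f g : ℝ² → ℝ} {x : ℝ²}

theorem pd_sub (hf : DifferentiableAt ℝ f x) (hg : DifferentiableAt ℝ g x) (j : Fin 2) :
    pd (fun y => f y - g y) j x = pd f j x - pd g j x := by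
  simp only [pd, fderiv_fun_sub hf hg, sub_apply]

theorem pd_const_mul (hf : DifferentiableAt ℝ f x) (c : ℝ) (j : Fin 2) :
    pd (fun y => c * f y) j x = c * pd f j x := by
  simp [pd, fderiv_const_mul hf]

theorem pd_const (c : ℝ) (j : Fin 2) : pd (fun _ => c) j = fun _ => 0 := by
  funext
  simp [pd]

theorem pd_mul (hf : DifferentiableAt ℝ f x) (hg : DifferentiableAt ℝ g x) (j : Fin 2) :
    pd (fun y => f y * g y) j x = f x * pd g j x + pd f j x * g x := by
  simp [pd, fderiv_fun_mul hf hg, mul_comm]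

theorem pd_sum {ι : Type*} {s : Finset ι} {F : ι → ℝ² → ℝ}
    (hF : ∀ i ∈ s, DifferentiableAt ℝ (F i) x) (j : Fin 2) :
    pd (fun y => ∑ i ∈ s, F i y) j x = ∑ i ∈ s, pd (F i) j x := by
  simp [pd, fderiv_fun_sum hF]

theorem pd_sq (hf : DifferentiableAt ℝ f x) (j : Fin 2) :
    pd (fun y => f y ^ 2) j x = 2 * f x * pd f j x := by
  simp [pd, fderiv_fun_pow 2 hf]

theorem pd_rpow (hf : DifferentiableAt ℝ f x) {γ : ℝ} (hγ : 1 ≤ γ) (j : Fin 2) :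
    pd (fun y => f y ^ γ) j x = γ * f x ^ (γ - 1) * pd f j x := by
  simp [pd, (hf.hasFDerivAt.rpow_const (.inr hγ)).fderiv]

theorem contDiff_pd {n : WithTop ℕ∞} (hf : ContDiff ℝ (n + 1) f) (j : Fin 2) :
    ContDiff ℝ n (pd f j) :=
  (hf.fderiv_right le_rfl).clm_apply contDiff_const

theorem contDiff_divV {n : WithTop ℕ∞} {v : ℝ² → ℝ²} (hv : ContDiff ℝ (n + 1) v) :
    ContDiff ℝ n (divV v) :=
  ContDiff.sum fun j _ => contDiff_pd (contDiff_euclidean.1 hv j) j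

theorem fderiv_eq_sum_pd (f : ℝ² → ℝ) (x : ℝ²) :
    fderiv ℝ f x = ∑ j, pd f j x • EuclideanSpace.proj j := by
  ext y
  have hy : ∑ j, y j • EuclideanSpace.single j (1 : ℝ) = y := by
    simpa using (EuclideanSpace.basisFun (Fin 2) ℝ).sum_repr y
  conv_lhs => rw [← hy]
  simp [pd, mul_comm]

theorem eq_of_pd_eq_zero (hf : Differentiable ℝ f) (hpd : ∀ j x, pd f j x = 0) (x y : ℝ²) :
    f x = f y :=
  is_const_of_fderiv_eq_zero hf (fun z => by simp [fderiv_eq_sum_pd, hpd]) x y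

theorem eq_zero_of_pd_eq_zero_of_memLp (hf : Differentiable ℝ f) (hpd : ∀ j x, pd f j x = 0)
    {p : ℝ≥0∞} (hp : p ≠ 0) (hp' : p ≠ ∞) (hLp : MemLp f p) (x : ℝ²) : f x = 0 := by
  have hconst : f = fun _ => f x := funext fun y => eq_of_pd_eq_zero hf hpd y x
  rw [hconst, memLp_const_iff hp hp'] at hLp
  simpa using hLp

theorem memLp_fderiv_of_memLp_pd {p : ℝ≥0∞} (hpd : ∀ j, MemLp (pd f j) p) :
    MemLp (fderiv ℝ f) p := by
  refine (memLp_finsetSum Finset.univ fun j _ => (hpd j).norm).mono'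
    (measurable_fderiv ℝ f).aestronglyMeasurable (.of_forall fun x => ?_)
  rw [fderiv_eq_sum_pd]
  refine norm_sum_le_of_le _ fun j _ => ?_
  rw [norm_smul]
  refine mul_le_of_le_one_right (norm_nonneg _) ?_
  exact ContinuousLinearMap.opNorm_le_bound _ zero_le_one fun y => by
    simpa using PiLp.norm_apply_le y j

theorem holderConjugate_finrank_two :
    NNReal.HolderConjugate (Module.finrank ℝ ℝ²) (2 : ℝ≥0) := by
  rw [finrank_euclideanSpace_fin]
  exact .two_two

theorem memLp_sq_of_memLp_pd (hf : ContDiff ℝ 1 f) (hL2 : MemLp f 2)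
    (hpd : ∀ j, MemLp (pd f j) 2) : MemLp (fun x => f x ^ 2) 2 :=
  memLp_sq_of_memLp_fderiv hf holderConjugate_finrank_two hL2 (memLp_fderiv_of_memLp_pd hpd)

end PartialDerivatives

section Energy

/-- The stationary compressible Navier–Stokes system for a density `ρ` and a velocity `v`, with
viscosities `μ`, `lam` and pressure law `p = a ρ ^ γ`. -/
structure IsStationaryNS (μ lam a γ : ℝ) (ρ : ℝ² → ℝ) (v : ℝ² → ℝ²) : Prop where
  continuity : ∀ x, ∑ j, pd (fun y => ρ y * v y j) j x = 0
  momentum : ∀ x, ∀ i : Fin 2,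
    ∑ j, pd (fun y => ρ y * v y j * v y i) j x =
      - pd (fun y => a * ρ y ^ γ) i x
        + μ * lap (fun y => v y i) x + (μ + lam) * pd (divV v) i x

/-- The rate `μ |∇v|² + (μ + λ) (div v)²` at which viscosity dissipates energy. -/
def dissipation (μ lam : ℝ) (v : ℝ² → ℝ²) (x : ℝ²) : ℝ :=
  μ * ∑ i, ∑ j, pd (fun y => v y i) j x ^ 2 + (μ + lam) * divV v x ^ 2

/-- The `j`-th component of the flux of kinetic energy and viscous stress,
`½ ρ |v|² v - μ ∇(½ |v|²) - (μ + λ) (div v) v`. -/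
def mechanicalFlux (μ lam : ℝ) (ρ : ℝ² → ℝ) (v : ℝ² → ℝ²) (j : Fin 2) (x : ℝ²) : ℝ :=
  1 / 2 * (ρ x * v x j * ∑ i, v x i ^ 2) - μ * ∑ i, v x i * pd (fun y => v y i) j x
    - (μ + lam) * (v x j * divV v x)

/-- The `j`-th component of the flux `a γ / (γ - 1) ρ ^ γ v` of enthalpy, that is, of internal
energy and pressure work. -/
def enthalpyFlux (a γ : ℝ) (ρ : ℝ² → ℝ) (v : ℝ² → ℝ²) (j : Fin 2) (x : ℝ²) : ℝ :=
  a * γ / (γ - 1) * (ρ x ^ γ * v x j)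

variable {μ lam a γ : ℝ} {ρ : ℝ² → ℝ} {v : ℝ² → ℝ²} {x : ℝ²}

theorem sum_pd_mul_of_sum_pd_eq_zero {m : Fin 2 → ℝ² → ℝ} {h : ℝ² → ℝ}
    (hm : ∀ j, DifferentiableAt ℝ (m j) x) (hh : DifferentiableAt ℝ h x)
    (hdiv : ∑ j, pd (m j) j x = 0) :
    ∑ j, pd (fun y => m j y * h y) j x = ∑ j, m j x * pd h j x := by
  simp_rw [pd_mul (hm _) hh, Finset.sum_add_distrib, ← Finset.sum_mul, hdiv, zero_mul, add_zero]

theorem sum_pd_massFlux_mul_sum_sq (hρ : DifferentiableAt ℝ ρ x)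
    (hv : ∀ i, DifferentiableAt ℝ (fun y => v y i) x)
    (hcont : ∑ j, pd (fun y => ρ y * v y j) j x = 0) :
    ∑ j, pd (fun y => ρ y * v y j * ∑ i, v y i ^ 2) j x =
      2 * ∑ i, v x i * ∑ j, pd (fun y => ρ y * v y j * v y i) j x := by
  have hm (j : Fin 2) : DifferentiableAt ℝ (fun y => ρ y * v y j) x := hρ.mul (hv j)
  have hsq (i : Fin 2) : DifferentiableAt ℝ (fun y => v y i ^ 2) x := (hv i).pow 2
  have hconv (i : Fin 2) : ∑ j, pd (fun y => ρ y * v y j * v y i) j x =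
      ∑ j, ρ x * v x j * pd (fun y => v y i) j x :=
    sum_pd_mul_of_sum_pd_eq_zero hm (hv i) hcont
  rw [sum_pd_mul_of_sum_pd_eq_zero hm (.fun_sum fun i _ => hsq i) hcont]
  simp_rw [hconv]
  simp_rw [pd_sum fun i _ => hsq i, pd_sq (hv _), Fin.sum_univ_two]
  ring

theorem sum_pd_sum_mul_pd (hv : ∀ i, ContDiff ℝ 2 fun y => v y i) :
    ∑ j, pd (fun y => ∑ i, v y i * pd (fun z => v z i) j y) j x =
      ∑ i, ∑ j, pd (fun y => v y i) j x ^ 2 + ∑ i, v x i * lap (fun y => v y i) x := by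
  have hvd (i : Fin 2) : DifferentiableAt ℝ (fun y => v y i) x :=
    (hv i).differentiable two_ne_zero x
  have hpd (i j : Fin 2) : DifferentiableAt ℝ (pd (fun y => v y i) j) x :=
    (contDiff_pd (n := 1) (hv i) j).differentiable one_ne_zero x
  have hexpand (j : Fin 2) : pd (fun y => ∑ i, v y i * pd (fun z => v z i) j y) j x =
      ∑ i, (v x i * pd (pd (fun y => v y i) j) j x + pd (fun y => v y i) j x ^ 2) := by
    rw [pd_sum fun i _ => (hvd i).fun_mul (hpd i j)]
    simp_rw [pd_mul (hvd _) (hpd _ j), sq]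
  simp_rw [hexpand, lap, Fin.sum_univ_two]
  ring

theorem sum_pd_mul_divV (hv : ∀ i, DifferentiableAt ℝ (fun y => v y i) x)
    (hdiv : DifferentiableAt ℝ (divV v) x) :
    ∑ j, pd (fun y => v y j * divV v y) j x = divV v x ^ 2 + ∑ i, v x i * pd (divV v) i x := by
  simp_rw [pd_mul (hv _) hdiv, Finset.sum_add_distrib, ← Finset.sum_mul]
  rw [add_comm, sq]
  rfl

-- The enthalpy `ρ ^ (γ - 1)` need not be differentiable where `ρ` vanishes, so the flux is
-- differentiated as `ρ ^ γ` times `v` and not as the enthalpy times the solenoidal field `ρ v`.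
theorem sum_pd_rpow_mul (hρ : DifferentiableAt ℝ ρ x) (hρ_nonneg : 0 ≤ ρ x)
    (hv : ∀ i, DifferentiableAt ℝ (fun y => v y i) x)
    (hcont : ∑ j, pd (fun y => ρ y * v y j) j x = 0) (hγ : 1 < γ) :
    γ / (γ - 1) * ∑ j, pd (fun y => ρ y ^ γ * v y j) j x =
      ∑ j, v x j * pd (fun y => ρ y ^ γ) j x := by
  have hγ' : γ - 1 ≠ 0 := (sub_pos.2 hγ).ne'
  have hrpow : ρ x ^ γ = ρ x ^ (γ - 1) * ρ x := by
    rw [← Real.rpow_add_one' hρ_nonneg (by linarith), sub_add_cancel]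
  simp_rw [pd_mul (hρ.rpow_const (.inr hγ.le)) (hv _), pd_rpow hρ hγ.le, hrpow]
  simp_rw [pd_mul hρ (hv _)] at hcont
  rw [div_mul_eq_mul_div, div_eq_iff hγ']
  simp only [Fin.sum_univ_two] at hcont ⊢
  linear_combination γ * ρ x ^ (γ - 1) * hcont

theorem contDiff_mechanicalFlux (hρ : ContDiff ℝ 1 ρ) (hv : ContDiff ℝ 2 v) (j : Fin 2) :
    ContDiff ℝ 1 (mechanicalFlux μ lam ρ v j) := by
  have hv1 (i : Fin 2) : ContDiff ℝ 1 fun y => v y i :=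
    (contDiff_euclidean.1 hv i).of_le one_le_two
  have hpd (i : Fin 2) : ContDiff ℝ 1 (pd (fun y => v y i) j) :=
    contDiff_pd (contDiff_euclidean.1 hv i) j
  have hdiv : ContDiff ℝ 1 (divV v) := contDiff_divV hv
  unfold mechanicalFlux
  fun_prop

theorem contDiff_enthalpyFlux (hρ : ContDiff ℝ 1 ρ) (hv : ContDiff ℝ 1 v) (hγ : 1 ≤ γ)
    (j : Fin 2) : ContDiff ℝ 1 (enthalpyFlux a γ ρ v j) :=
  contDiff_const.mul <|
    (hρ.rpow_const_of_le (by exact_mod_cast hγ)).mul (contDiff_euclidean.1 hv j)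

theorem sum_pd_mechanicalFlux (hρ : DifferentiableAt ℝ ρ x) (hv : ContDiff ℝ 2 v)
    (hcont : ∑ j, pd (fun y => ρ y * v y j) j x = 0) :
    ∑ j, pd (mechanicalFlux μ lam ρ v j) j x =
      ∑ i, v x i * (∑ j, pd (fun y => ρ y * v y j * v y i) j x
        - μ * lap (fun y => v y i) x - (μ + lam) * pd (divV v) i x) - dissipation μ lam v x := by
  have hvd (i : Fin 2) : DifferentiableAt ℝ (fun y => v y i) x :=
    (contDiff_euclidean.1 hv i).differentiable two_ne_zero x
  have hpd (i j : Fin 2) : DifferentiableAt ℝ (pd (fun y => v y i) j) x :=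
    (contDiff_pd (n := 1) (contDiff_euclidean.1 hv i) j).differentiable one_ne_zero x
  have hdiv : DifferentiableAt ℝ (divV v) x :=
    (contDiff_divV (n := 1) hv).differentiable one_ne_zero x
  have hflux (j : Fin 2) : pd (mechanicalFlux μ lam ρ v j) j x =
      1 / 2 * pd (fun y => ρ y * v y j * ∑ i, v y i ^ 2) j x
        - μ * pd (fun y => ∑ i, v y i * pd (fun z => v z i) j y) j x
        - (μ + lam) * pd (fun y => v y j * divV v y) j x := by
    unfold mechanicalFlux
    rw [pd_sub, pd_sub, pd_const_mul, pd_const_mul, pd_const_mul] <;> fun_prop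
  simp_rw [hflux, Finset.sum_sub_distrib, ← Finset.mul_sum]
  rw [sum_pd_massFlux_mul_sum_sq hρ hvd hcont, sum_pd_sum_mul_pd (contDiff_euclidean.1 hv),
    sum_pd_mul_divV hvd hdiv, dissipation]
  simp only [Fin.sum_univ_two]
  ring

theorem sum_pd_enthalpyFlux (hρ : DifferentiableAt ℝ ρ x) (hρ_nonneg : 0 ≤ ρ x)
    (hv : ∀ i, DifferentiableAt ℝ (fun y => v y i) x)
    (hcont : ∑ j, pd (fun y => ρ y * v y j) j x = 0) (hγ : 1 < γ) :
    ∑ j, pd (enthalpyFlux a γ ρ v j) j x = ∑ i, v x i * pd (fun y => a * ρ y ^ γ) i x := by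
  have hpow : DifferentiableAt ℝ (fun y => ρ y ^ γ) x := hρ.rpow_const (.inr hγ.le)
  have hflux (j : Fin 2) : pd (enthalpyFlux a γ ρ v j) j x =
      a * γ / (γ - 1) * pd (fun y => ρ y ^ γ * v y j) j x :=
    pd_const_mul (hpow.mul (hv j)) _ j
  calc ∑ j, pd (enthalpyFlux a γ ρ v j) j x
      = a * (γ / (γ - 1) * ∑ j, pd (fun y => ρ y ^ γ * v y j) j x) := by
        simp_rw [hflux, ← Finset.mul_sum]
        ring
    _ = ∑ i, v x i * pd (fun y => a * ρ y ^ γ) i x := by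
        simp_rw [sum_pd_rpow_mul hρ hρ_nonneg hv hcont hγ, pd_const_mul hpow, Finset.mul_sum,
          mul_left_comm]

theorem sum_pd_mechanicalFlux_add_pd_enthalpyFlux (h : IsStationaryNS μ lam a γ ρ v)
    (hγ : 1 < γ) (hρ : Differentiable ℝ ρ) (hρ_nonneg : ∀ x, 0 ≤ ρ x) (hv : ContDiff ℝ 2 v)
    (x : ℝ²) :
    ∑ j, (pd (mechanicalFlux μ lam ρ v j) j x + pd (enthalpyFlux a γ ρ v j) j x) =
      -dissipation μ lam v x := by
  have hvd (i : Fin 2) : DifferentiableAt ℝ (fun y => v y i) x :=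
    (contDiff_euclidean.1 hv i).differentiable two_ne_zero x
  rw [Finset.sum_add_distrib, sum_pd_mechanicalFlux (hρ x) hv (h.continuity x),
    sum_pd_enthalpyFlux (hρ x) (hρ_nonneg x) hvd (h.continuity x) hγ]
  simp_rw [h.momentum x, Fin.sum_univ_two]
  ring

theorem continuous_dissipation (hv : ContDiff ℝ 1 v) : Continuous (dissipation μ lam v) := by
  have hpd (i j : Fin 2) : Continuous (pd (fun y => v y i) j) :=
    (contDiff_pd (n := 0) (by simpa using contDiff_euclidean.1 hv i) j).continuous
  have hdiv : Continuous (divV v) := (contDiff_divV (n := 0) (by simpa using hv)).continuous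
  unfold dissipation
  fun_prop

theorem dissipation_nonneg (hμ : 0 ≤ μ) (hlam : 0 ≤ lam + μ) (v : ℝ² → ℝ²) (x : ℝ²) :
    0 ≤ dissipation μ lam v x := by
  rw [add_comm] at hlam
  unfold dissipation
  positivity

theorem pd_eq_zero_of_dissipation_eq_zero (hμ : 0 < μ) (hlam : 0 ≤ lam + μ)
    (hx : dissipation μ lam v x = 0) (i j : Fin 2) : pd (fun y => v y i) j x = 0 := by
  have hgrad : ∑ i, ∑ j, pd (fun y => v y i) j x ^ 2 = 0 := by
    have hdiv : 0 ≤ (μ + lam) * divV v x ^ 2 := mul_nonneg (by linarith) (sq_nonneg _)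
    have hnonneg : 0 ≤ ∑ i, ∑ j, pd (fun y => v y i) j x ^ 2 := by positivity
    have hmul := ((add_eq_zero_iff_of_nonneg (mul_nonneg hμ.le hnonneg) hdiv).1 hx).1
    exact (mul_eq_zero.1 hmul).resolve_left hμ.ne'
  have hrow := (Finset.sum_eq_zero_iff_of_nonneg fun i _ => by positivity).1 hgrad i
    (Finset.mem_univ i)
  exact pow_eq_zero_iff two_ne_zero |>.1 <|
    (Finset.sum_eq_zero_iff_of_nonneg fun j _ => sq_nonneg _).1 hrow j (Finset.mem_univ j)

end Energy

section Integrability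

variable {μ lam a γ : ℝ} {ρ : ℝ² → ℝ} {v : ℝ² → ℝ²}

theorem memLp_pd_of_integrable_sum_sq (hv : ContDiff ℝ 1 v)
    (hgrad : Integrable fun x => ∑ i, ∑ j, pd (fun y => v y i) j x ^ 2) (i j : Fin 2) :
    MemLp (pd (fun y => v y i) j) 2 := by
  have hpd : Continuous (pd (fun y => v y i) j) :=
    (contDiff_pd (n := 0) (by simpa using contDiff_euclidean.1 hv i) j).continuous
  refine (memLp_two_iff_integrable_sq hpd.aestronglyMeasurable).2 <|
    hgrad.mono' (hpd.pow 2).aestronglyMeasurable (.of_forall fun x => ?_)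
  rw [Real.norm_of_nonneg (sq_nonneg _)]
  calc pd (fun y => v y i) j x ^ 2
      ≤ ∑ j, pd (fun y => v y i) j x ^ 2 :=
        Finset.single_le_sum (f := fun j => pd (fun y => v y i) j x ^ 2)
          (fun j _ => sq_nonneg _) (Finset.mem_univ j)
    _ ≤ ∑ i, ∑ j, pd (fun y => v y i) j x ^ 2 :=
        Finset.single_le_sum (f := fun i => ∑ j, pd (fun y => v y i) j x ^ 2)
          (fun i _ => by positivity) (Finset.mem_univ i)

theorem memLp_divV {p : ℝ≥0∞} (hdv : ∀ i j, MemLp (pd (fun y => v y i) j) p) :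
    MemLp (divV v) p :=
  memLp_finsetSum _ fun j _ => hdv j j

theorem integrable_dissipation (hdv : ∀ i j, MemLp (pd (fun y => v y i) j) 2) :
    Integrable (dissipation μ lam v) :=
  ((integrable_finsetSum _ fun i _ =>
    integrable_finsetSum _ fun j _ => (hdv i j).integrable_sq).const_mul μ).add
      ((memLp_divV hdv).integrable_sq.const_mul (μ + lam))

theorem integrable_mechanicalFlux (hρ : Continuous ρ) (hρb : ∃ M, ∀ x, |ρ x| ≤ M)
    (hv : ContDiff ℝ 1 v) (hvL2 : MemLp v 2)
    (hdv : ∀ i j, MemLp (pd (fun y => v y i) j) 2) (j : Fin 2) :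
    Integrable (mechanicalFlux μ lam ρ v j) := by
  obtain ⟨M, hM⟩ := hρb
  have hmass : MemLp (fun x => ρ x * v x j) 2 :=
    memLp_mul_of_norm_le hρ.aestronglyMeasurable hM (hvL2.eval_piLp j)
  have hsq : MemLp (fun x => ∑ i, v x i ^ 2) 2 := memLp_finsetSum _ fun i _ =>
    memLp_sq_of_memLp_pd (contDiff_euclidean.1 hv i) (hvL2.eval_piLp i) (hdv i)
  exact (((hmass.integrable_mul hsq).const_mul _).sub
    ((integrable_finsetSum _ fun i _ =>
      (hvL2.eval_piLp i).integrable_mul (hdv i j)).const_mul μ)).sub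
    (((hvL2.eval_piLp j).integrable_mul (memLp_divV hdv)).const_mul (μ + lam))

theorem memLp_enthalpyFlux (hρ : Continuous ρ) (hρ_nonneg : ∀ x, 0 ≤ ρ x)
    (hρb : ∃ M, ∀ x, |ρ x| ≤ M) {p : ℝ≥0∞} (hv : MemLp v p) (hγ : 0 ≤ γ) (j : Fin 2) :
    MemLp (enthalpyFlux a γ ρ v j) p := by
  obtain ⟨M, hM⟩ := hρb
  have hpow : Continuous fun x => ρ x ^ γ := hρ.rpow_const fun _ => .inr hγ
  have hbound (x : ℝ²) : |ρ x ^ γ| ≤ M ^ γ := by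
    rw [abs_of_nonneg (Real.rpow_nonneg (hρ_nonneg x) γ)]
    exact Real.rpow_le_rpow (hρ_nonneg x) ((le_abs_self _).trans (hM x)) hγ
  exact (memLp_mul_of_norm_le hpow.aestronglyMeasurable hbound (hv.eval_piLp j)).const_mul _

end Integrability

section Liouville

variable {μ lam a γ : ℝ} {ρ : ℝ² → ℝ} {v : ℝ² → ℝ²}

theorem integral_dissipation_eq_zero (h : IsStationaryNS μ lam a γ ρ v) (hγ : 1 < γ)
    (hρ : ContDiff ℝ 1 ρ) (hρ_nonneg : ∀ x, 0 ≤ ρ x) (hρb : ∃ M, ∀ x, |ρ x| ≤ M)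
    (hv : ContDiff ℝ 2 v) (hvL2 : MemLp v 2)
    (hdv : ∀ i j, MemLp (pd (fun y => v y i) j) 2) : ∫ x, dissipation μ lam v x = 0 := by
  have hv1 : ContDiff ℝ 1 v := hv.of_le one_le_two
  have hbalance := sum_pd_mechanicalFlux_add_pd_enthalpyFlux h hγ
    (hρ.differentiable one_ne_zero) hρ_nonneg hv
  have hflux : ∫ x, ∑ j, (pd (mechanicalFlux μ lam ρ v j) j x
      + pd (enthalpyFlux a γ ρ v j) j x) = 0 := by
    refine integral_sum_fderiv_add_fderiv_eq_zero holderConjugate_finrank_two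
      (contDiff_mechanicalFlux hρ hv)
      (integrable_mechanicalFlux hρ.continuous hρb hv1 hvL2 hdv)
      (contDiff_enthalpyFlux hρ hv1 hγ.le)
      (memLp_enthalpyFlux hρ.continuous hρ_nonneg hρb hvL2 (by linarith)) _ ?_
    exact (integrable_dissipation hdv).neg.congr (.of_forall fun x => (hbalance x).symm)
  simpa only [hbalance, integral_neg, neg_eq_zero] using hflux

theorem dissipation_eq_zero_of_integral_eq_zero (hμ : 0 ≤ μ) (hlam : 0 ≤ lam + μ)
    (hv : ContDiff ℝ 1 v) (hdv : ∀ i j, MemLp (pd (fun y => v y i) j) 2)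
    (hint : ∫ x, dissipation μ lam v x = 0) (x : ℝ²) : dissipation μ lam v x = 0 := by
  have hae : dissipation μ lam v =ᵐ[volume] 0 :=
    (integral_eq_zero_iff_of_nonneg (dissipation_nonneg hμ hlam v)
      (integrable_dissipation hdv)).1 hint
  exact congrFun (((continuous_dissipation hv).ae_eq_iff_eq volume continuous_zero).1 hae) x

theorem density_eq_of_velocity_eq_zero (h : IsStationaryNS μ lam a γ ρ v) (ha : a ≠ 0)
    (hγ : 1 ≤ γ) (hρ : Differentiable ℝ ρ) (hρ_nonneg : ∀ x, 0 ≤ ρ x) (hv : v = 0) (x y : ℝ²) :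
    ρ x = ρ y := by
  have hpressure (j : Fin 2) (z : ℝ²) : pd (fun y => a * ρ y ^ γ) j z = 0 := by
    have hdiv : divV (0 : ℝ² → ℝ²) = fun _ => 0 := by
      funext
      simp [divV, pd_const]
    simpa [hv, hdiv, lap, pd_const] using h.momentum z j
  have hdiff : Differentiable ℝ fun y => a * ρ y ^ γ :=
    (hρ.rpow_const fun _ => .inr hγ).const_mul a
  have hpow := mul_left_cancel₀ ha (eq_of_pd_eq_zero hdiff hpressure x y)
  exact (Real.rpow_left_inj (hρ_nonneg x) (hρ_nonneg y) (by linarith)).1 hpow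

theorem liouville_NS_2D_general (hμ : 0 < μ) (hlam : 0 ≤ lam + μ) (ha : a ≠ 0) (hγ : 1 < γ)
    (hρ : ContDiff ℝ 1 ρ) (hv : ContDiff ℝ 2 v) (hρ_nonneg : ∀ x, 0 ≤ ρ x)
    (h : IsStationaryNS μ lam a γ ρ v) (hρb : ∃ M, ∀ x, |ρ x| ≤ M)
    (hvL2 : Integrable fun x => ‖v x‖ ^ 2)
    (hgrad : Integrable fun x => ∑ i, ∑ j, pd (fun y => v y i) j x ^ 2) :
    (∀ x, v x = 0) ∧ ∃ c : ℝ, ∀ x, ρ x = c := by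
  have hv1 : ContDiff ℝ 1 v := hv.of_le one_le_two
  have hvLp : MemLp v 2 :=
    (memLp_two_iff_integrable_sq_norm hv.continuous.aestronglyMeasurable).2 hvL2
  have hdv := memLp_pd_of_integrable_sum_sq hv1 hgrad
  have hdissipation := dissipation_eq_zero_of_integral_eq_zero hμ.le hlam hv1 hdv
    (integral_dissipation_eq_zero h hγ hρ hρ_nonneg hρb hv hvLp hdv)
  have hv0 (x : ℝ²) : v x = 0 := by
    ext i
    exact eq_zero_of_pd_eq_zero_of_memLp ((contDiff_euclidean.1 hv1 i).differentiable one_ne_zero)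
      (fun j y => pd_eq_zero_of_dissipation_eq_zero hμ hlam (hdissipation y) i j)
      two_ne_zero ENNReal.ofNat_ne_top (hvLp.eval_piLp i) x
  exact ⟨hv0, ρ 0, fun x => density_eq_of_velocity_eq_zero h ha hγ.le
    (hρ.differentiable one_ne_zero) hρ_nonneg (funext hv0) x 0⟩

end Liouville

/-- Liouville type theorem for the 2D stationary compressible Navier–Stokes
system with `v ∈ H¹(ℝ²)`. -/
theorem liouville_NS_2D
    (μ lam a γ : ℝ)
    (hμ : 0 < μ) (hlam : 0 < lam + μ) (ha : 0 < a) (hγ : 1 < γ)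
    (ρ : EuclideanSpace ℝ (Fin 2) → ℝ)
    (v : EuclideanSpace ℝ (Fin 2) → EuclideanSpace ℝ (Fin 2))
    (hρsm : ContDiff ℝ (⊤ : ℕ∞) ρ) (hvsm : ContDiff ℝ (⊤ : ℕ∞) v)
    (hρnn : ∀ x, 0 ≤ ρ x)
    -- continuity equation: div(ρ v) = 0
    (hcont : ∀ x, ∑ j, pd (fun y => ρ y * v y j) j x = 0)
    -- momentum equation: div(ρ v ⊗ v) = -∇p + μ Δv + (μ+λ) ∇ div v,  p = a ρ^γ
    (hmom : ∀ x, ∀ i : Fin 2,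
      ∑ j, pd (fun y => ρ y * v y j * v y i) j x =
        - pd (fun y => a * ρ y ^ γ) i x
          + μ * lap (fun y => v y i) x + (μ + lam) * pd (divV v) i x)
    -- ρ ∈ L^∞
    (hρb : ∃ M, ∀ x, |ρ x| ≤ M)
    -- v ∈ L²(ℝ²)
    (hvL2 : Integrable (fun x => ‖v x‖ ^ 2))
    -- ∇v ∈ L²(ℝ²)
    (hgrad : Integrable (fun x => ∑ i, ∑ j, (pd (fun y => v y i) j x) ^ 2)) :
    (∀ x, v x = 0) ∧ (∃ c : ℝ, ∀ x, ρ x = c) :=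
  liouville_NS_2D_general hμ hlam.le ha.ne' hγ (hρsm.of_le ENat.LEInfty.out)
    (hvsm.of_le ENat.LEInfty.out) hρnn ⟨hcont, hmom⟩ hρb hvL2 hgrad
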